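/- arXiv:1306.2868 — 2 statements merged into one kernel-verified Lean document; each statement's English description precedes it below -/
import Mathlib

section
/- Let Ω be a measurable space, μ a probability measure on Ω, 𝒢 a countable index set, and for each x ∈ 𝒢 let κ_x be a Markov kernel from Ω to Ω such that μ is invariant under κ_x (μ.bind κ_x = μ). Define Ψ_x f(η) = ∫ f(ξ) κ_x(η)(dξ), D_x f = Ψ_x f − f, the Dirichlet form ℰ(f,f) = (1/2) Σ_{x∈𝒢} ∫ (∫ (f(ξ) − f(η))² κ_x(η)(dξ)) μ(dη), and the Orlicz norm ‖g‖_Φ = inf{a > 0 : ∫ Φ(g/a) dμ ≤ 1} with Φ(x) = x²/log(e+|x|). There is a universal constant c₂ > 0 (one may take c₂ = (13/4)·700⁴) with the following property: if C ≥ 1 is such that Var_μ(g) ≤ C Σ_{x∈𝒢} ‖D_x g‖_Φ² for every bounded measurable g : Ω → ℝ, then for every bounded measurable f : Ω → ℝ one has Ent_μ(f²) ≤ c₂ · C · ℰ(f,f), where Ent_μ(f²) = ∫ f² log(f² / ∫f²dμ) dμ and Var_μ(f) = ∫ (f − ∫f dμ)² dμ. -/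
open MeasureTheory ProbabilityTheory Real
open scoped ENNReal

/-- The function `Φ(x) = x² / log(e + |x|)`. -/
noncomputable def Phi (x : ℝ) : ℝ := x ^ 2 / Real.log (Real.exp 1 + |x|)

/-- The Orlicz (Luxemburg) norm `‖f‖_{φ;μ} = inf {a > 0 : ∫ φ(f/a) dμ ≤ 1}`,
valued in `[0,∞]` (it is `∞` when no such `a` exists). -/
noncomputable def orliczNorm {Ω : Type*} [MeasurableSpace Ω] (μ : Measure Ω)
    (φ : ℝ → ℝ) (f : Ω → ℝ) : ℝ≥0∞ :=
  sInf {a : ℝ≥0∞ | ∃ r : ℝ, 0 < r ∧ a = ENNReal.ofReal r ∧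
    ∫⁻ x, ENNReal.ofReal (φ (f x / r)) ∂μ ≤ 1}

/-!
By homogeneity it suffices to bound `∫ F² log F²` for `F = |f| / ‖f‖₂`. Cut `F` into layers
between the dyadic heights `2, 4, 8, …`. By Chebyshev, the layer `g` above the height `T` lives on a
set of measure at most `T⁻²`. For such a `g` the logarithm in `Φ` gains a factor `log T`, namely
`‖D_x g‖_Φ² ≤ 8 / log T · ∫∫ (g ξ - g η)² κ_x(η, dξ) μ(dη)`, so that the variance inequality
controls `log T · ∫ g²` by the energy of `g`. Up to the quadratic term `(F - 1)²`, the weights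
`log T` reassemble the entropy of `F²`, while the energies of the layers add up to at most the
energy of `F`.
-/

section SecondMoments

variable {Ω : Type*} [MeasurableSpace Ω] {ν : Measure Ω} {g : Ω → ℝ}

lemma memLp_of_abs_le [IsFiniteMeasure ν] (hg : Measurable g) (hb : ∃ M, ∀ η, |g η| ≤ M)
    (p : ℝ≥0∞) : MemLp g p ν :=
  let ⟨M, hM⟩ := hb
  MemLp.of_bound hg.aestronglyMeasurable M (.of_forall hM)

lemma sq_integral_le_measureReal_mul_integral_sq [IsFiniteMeasure ν] (hg : MemLp g 2 ν)
    {A : Set Ω} (hA : MeasurableSet A) (hgA : ∀ η ∉ A, g η = 0) :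
    (∫ η, g η ∂ν) ^ 2 ≤ ν.real A * ∫ η, g η ^ 2 ∂ν := by
  have hg1 : Integrable g ν := hg.integrable one_le_two
  have quadratic_nonneg (l : ℝ) :
      0 ≤ ν.real A * (l * l) + (-2 * ∫ η, g η ∂ν) * l + ∫ η, g η ^ 2 ∂ν := by
    have hsplit (η : Ω) :
        (g η - A.indicator (fun _ ↦ l) η) ^ 2 =
          (A.indicator (fun _ ↦ l * l) η + (-2 * g η) * l) + g η ^ 2 := by
      by_cases hη : η ∈ A
      · simp only [Set.indicator_of_mem hη]; ring
      · simp [Set.indicator_of_notMem hη, hgA η hη]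
    have hind : Integrable (A.indicator fun _ ↦ l * l) ν := (integrable_const _).indicator hA
    have hlin : Integrable (fun η ↦ (-2 * g η) * l) ν := (hg1.const_mul _).mul_const _
    calc 0 ≤ ∫ η, (g η - A.indicator (fun _ ↦ l) η) ^ 2 ∂ν := integral_nonneg fun _ ↦ sq_nonneg _
      _ = _ := by
        simp_rw [hsplit]
        rw [integral_add (hind.fun_add hlin) hg.integrable_sq, integral_add hind hlin,
          integral_indicator_const _ hA, integral_mul_const, integral_const_mul, smul_eq_mul]
  have := discrim_le_zero quadratic_nonneg
  rw [discrim] at this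
  linarith

lemma integral_sq_le_two_mul_variance [IsProbabilityMeasure ν] (hg : MemLp g 2 ν)
    {A : Set Ω} (hA : MeasurableSet A) (hgA : ∀ η ∉ A, g η = 0) (hνA : ν.real A ≤ 1 / 2) :
    ∫ η, g η ^ 2 ∂ν ≤ 2 * Var[g; ν] := by
  have hsq : (∫ η, g η ∂ν) ^ 2 ≤ 1 / 2 * ∫ η, g η ^ 2 ∂ν :=
    (sq_integral_le_measureReal_mul_integral_sq hg hA hgA).trans
      (mul_le_mul_of_nonneg_right hνA (integral_nonneg fun _ ↦ sq_nonneg _))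
  rw [variance_eq_sub hg]
  simp only [Pi.pow_apply]
  linarith

lemma integral_sub_one_sq_le_two_mul_variance [IsProbabilityMeasure ν] (hg : MemLp g 2 ν)
    (hg0 : 0 ≤ ∫ η, g η ∂ν) (hg1 : ∫ η, g η ^ 2 ∂ν = 1) :
    ∫ η, (g η - 1) ^ 2 ∂ν ≤ 2 * Var[g; ν] := by
  have hint : Integrable g ν := hg.integrable one_le_two
  have hexpand : ∫ η, (g η - 1) ^ 2 ∂ν = 2 - 2 * ∫ η, g η ∂ν := by
    have (η : Ω) : (g η - 1) ^ 2 = (g η ^ 2 - 2 * g η) + 1 := by ring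
    simp_rw [this]
    have hsub : Integrable (fun η ↦ g η ^ 2 - 2 * g η) ν :=
      hg.integrable_sq.sub (hint.const_mul 2)
    rw [integral_add hsub (integrable_const 1),
      integral_sub hg.integrable_sq (hint.const_mul 2), integral_const_mul, hg1]
    simp
    ring
  have hvar : Var[g; ν] = 1 - (∫ η, g η ∂ν) ^ 2 := by
    rw [variance_eq_sub hg]
    simp only [Pi.pow_apply, hg1]
  nlinarith [variance_nonneg g ν]

lemma sq_mul_measureReal_ge_le_integral_sq [IsFiniteMeasure ν] (hg : MemLp g 2 ν) {T : ℝ}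
    (hT : 0 ≤ T) : T ^ 2 * ν.real {η | T ≤ g η} ≤ ∫ η, g η ^ 2 ∂ν :=
  calc T ^ 2 * ν.real {η | T ≤ g η} ≤ T ^ 2 * ν.real {η | T ^ 2 ≤ g η ^ 2} := by
        have : {η | T ≤ g η} ⊆ {η | T ^ 2 ≤ g η ^ 2} := fun η hη ↦ pow_le_pow_left₀ hT hη 2
        exact mul_le_mul_of_nonneg_left (measureReal_mono this) (sq_nonneg T)
    _ ≤ ∫ η, g η ^ 2 ∂ν :=
        mul_meas_ge_le_integral_of_nonneg (.of_forall fun _ ↦ sq_nonneg _) hg.integrable_sq _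

lemma integrable_sq_mul_log_sq [IsFiniteMeasure ν] (hg : Measurable g)
    (hb : ∃ M, ∀ η, |g η| ≤ M) : Integrable (fun η ↦ g η ^ 2 * log (g η ^ 2)) ν := by
  obtain ⟨M, hM⟩ := hb
  obtain ⟨B, hB⟩ := isCompact_Icc.exists_bound_of_continuousOn
    (continuous_mul_log.continuousOn (s := Set.Icc 0 (M ^ 2)))
  exact .of_bound (by fun_prop) B
    (.of_forall fun η ↦ hB _ ⟨sq_nonneg _, sq_le_sq.2 ((hM η).trans (le_abs_self M))⟩)

end SecondMoments

section Phi

lemma one_le_log_exp_one_add_abs (y : ℝ) : 1 ≤ log (exp 1 + |y|) :=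
  (le_log_iff_exp_le (by positivity)).2 (le_add_of_nonneg_right (abs_nonneg y))

lemma Phi_le_sq (y : ℝ) : Phi y ≤ y ^ 2 :=
  div_le_self (sq_nonneg y) (one_le_log_exp_one_add_abs y)

lemma Phi_le_four_div_log_mul_sq {T y : ℝ} (hT : 1 < T) (hTy : T ≤ 4 * y ^ 2) :
    Phi y ≤ 4 / log T * y ^ 2 := by
  have he : 2 ≤ exp 1 := by linarith [exp_one_gt_d9]
  have hy := abs_nonneg y
  have hlog : log T ≤ 4 * log (exp 1 + |y|) := by
    have : T ≤ (exp 1 + |y|) ^ 4 :=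
      calc T ≤ 2 ^ 2 * |y| ^ 2 := by rw [sq_abs]; linarith
        _ ≤ (exp 1 + |y|) ^ 2 * (exp 1 + |y|) ^ 2 := by gcongr <;> linarith
        _ = (exp 1 + |y|) ^ 4 := by ring
    calc log T ≤ log ((exp 1 + |y|) ^ 4) := log_le_log (by linarith) this
      _ = 4 * log (exp 1 + |y|) := by rw [log_pow]; norm_num
  have hT0 : 0 < log T := log_pos hT
  rw [Phi, div_mul_eq_mul_div, div_le_div_iff₀ (by linarith) hT0]
  nlinarith [mul_le_mul_of_nonneg_left hlog (sq_nonneg y)]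

end Phi

section Orlicz

variable {Ω : Type*} [MeasurableSpace Ω]

lemma orliczNorm_sq_le {μ : Measure Ω} {φ : ℝ → ℝ} {h : Ω → ℝ} {E : ℝ≥0∞}
    (H : ∀ r : ℝ, 0 < r → E ≤ ENNReal.ofReal (r ^ 2) →
      ∫⁻ η, ENNReal.ofReal (φ (h η / r)) ∂μ ≤ 1) :
    orliczNorm μ φ h ^ 2 ≤ E := by
  refine le_of_forall_gt_imp_ge_of_dense fun b hb ↦ ?_
  obtain rfl | hbt := eq_or_ne b ⊤
  · exact le_top
  have hb0 : 0 < b.toReal := ENNReal.toReal_pos hb.ne_bot hbt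
  have hbr : ENNReal.ofReal (√b.toReal ^ 2) = b := by
    rw [sq_sqrt hb0.le, ENNReal.ofReal_toReal hbt]
  calc orliczNorm μ φ h ^ 2 ≤ ENNReal.ofReal √b.toReal ^ 2 := by
        gcongr
        exact sInf_le ⟨_, sqrt_pos.2 hb0, rfl, H _ (sqrt_pos.2 hb0) (hb.le.trans_eq hbr.symm)⟩
    _ = b := by rw [← ENNReal.ofReal_pow (sqrt_nonneg _), hbr]

end Orlicz

section Energy

variable {Ω : Type*} [MeasurableSpace Ω]

/-- The discrete derivative `D g(η) = ∫ g dκ(η) - g(η)` along the kernel `κ`. -/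
noncomputable def kernelDiff (κ : Kernel Ω Ω) (g : Ω → ℝ) (η : Ω) : ℝ :=
  (∫ ξ, g ξ ∂(κ η)) - g η

/-- The mean squared increment `∫ (g(ξ) - g(η))² κ(η)(dξ)` of `g` along `κ`, that is, twice the
carré du champ of `κ`. -/
noncomputable def meanSqIncrement (κ : Kernel Ω Ω) (g : Ω → ℝ) (η : Ω) : ℝ :=
  ∫ ξ, (g ξ - g η) ^ 2 ∂(κ η)

/-- The energy `∫∫ (g(ξ) - g(η))² κ(η)(dξ) μ(dη)` of `g` along a single kernel. -/
noncomputable def energy (μ : Measure Ω) (κ : Kernel Ω Ω) (g : Ω → ℝ) : ℝ≥0∞ :=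
  ∫⁻ η, ENNReal.ofReal (meanSqIncrement κ g η) ∂μ

/-- The Dirichlet form `ℰ(g, g)` of a family of kernels. -/
noncomputable def dirichletForm {G : Type*} (μ : Measure Ω) (κ : G → Kernel Ω Ω) (g : Ω → ℝ) :
    ℝ≥0∞ :=
  1 / 2 * ∑' x, energy μ (κ x) g

variable {μ : Measure Ω} {κ : Kernel Ω Ω} {g : Ω → ℝ}

lemma meanSqIncrement_nonneg (κ : Kernel Ω Ω) (g : Ω → ℝ) (η : Ω) : 0 ≤ meanSqIncrement κ g η :=
  integral_nonneg fun _ ↦ sq_nonneg _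

lemma measurable_meanSqIncrement [IsSFiniteKernel κ] (hg : Measurable g) :
    Measurable (meanSqIncrement κ g) :=
  have : Measurable fun p : Ω × Ω ↦ (g p.2 - g p.1) ^ 2 := by fun_prop
  (this.stronglyMeasurable.integral_kernel_prod_right' (κ := κ)).measurable

lemma sq_kernelDiff_le_measureReal_mul_meanSqIncrement [IsMarkovKernel κ] {η : Ω}
    (hg : MemLp g 2 (κ η)) {A : Set Ω} (hA : MeasurableSet A) (hgA : ∀ ξ ∉ A, g ξ = g η) :
    kernelDiff κ g η ^ 2 ≤ (κ η).real A * meanSqIncrement κ g η := by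
  have hdiff : kernelDiff κ g η = ∫ ξ, (g ξ - g η) ∂(κ η) := by
    rw [integral_sub (hg.integrable one_le_two) (integrable_const _)]
    simp [kernelDiff]
  rw [hdiff]
  exact sq_integral_le_measureReal_mul_integral_sq (hg.sub (memLp_const _)) hA
    fun ξ hξ ↦ sub_eq_zero.2 (hgA ξ hξ)

lemma sq_kernelDiff_le_meanSqIncrement [IsMarkovKernel κ] {η : Ω} (hg : MemLp g 2 (κ η)) :
    kernelDiff κ g η ^ 2 ≤ meanSqIncrement κ g η := by
  simpa using sq_kernelDiff_le_measureReal_mul_meanSqIncrement hg .univ (by simp)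

lemma orliczNorm_kernelDiff_sq_le_energy [IsMarkovKernel κ] (hg : ∀ η, MemLp g 2 (κ η)) :
    orliczNorm μ Phi (kernelDiff κ g) ^ 2 ≤ energy μ κ g := by
  refine orliczNorm_sq_le fun r hr hE ↦ ?_
  have hpt (η : Ω) : ENNReal.ofReal (Phi (kernelDiff κ g η / r)) ≤
      ENNReal.ofReal (r ^ 2)⁻¹ * ENNReal.ofReal (meanSqIncrement κ g η) := by
    rw [← ENNReal.ofReal_mul (by positivity)]
    refine ENNReal.ofReal_le_ofReal ((Phi_le_sq _).trans ?_)
    rw [div_pow, div_eq_inv_mul]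
    gcongr
    exact sq_kernelDiff_le_meanSqIncrement (hg η)
  calc _ ≤ ∫⁻ η, ENNReal.ofReal (r ^ 2)⁻¹ * ENNReal.ofReal (meanSqIncrement κ g η) ∂μ :=
        lintegral_mono hpt
    _ = ENNReal.ofReal (r ^ 2)⁻¹ * energy μ κ g := lintegral_const_mul' _ _ ENNReal.ofReal_ne_top
    _ ≤ ENNReal.ofReal (r ^ 2)⁻¹ * ENNReal.ofReal (r ^ 2) := by gcongr
    _ = 1 := by
      rw [← ENNReal.ofReal_mul (by positivity), inv_mul_cancel₀ (by positivity),
        ENNReal.ofReal_one]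

lemma two_mul_dirichletForm {G : Type*} (μ : Measure Ω) (κ : G → Kernel Ω Ω) (g : Ω → ℝ) :
    2 * dirichletForm μ κ g = ∑' x, energy μ (κ x) g := by
  rw [dirichletForm, ← mul_assoc, one_div, ENNReal.mul_inv_cancel two_ne_zero ENNReal.ofNat_ne_top,
    one_mul]

lemma sum_energy_comp_le [IsFiniteKernel κ] (hg : Measurable g)
    (hg2 : ∀ η, MemLp g 2 (κ η)) {ι : Type*} {s : Finset ι} {ψ : ι → ℝ → ℝ}
    (hψ : ∀ i, Measurable (ψ i)) {c : ℝ}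
    (hψc : ∀ u v, ∑ i ∈ s, (ψ i u - ψ i v) ^ 2 ≤ c * (u - v) ^ 2) :
    ∑ i ∈ s, energy μ κ (fun η ↦ ψ i (g η)) ≤ ENNReal.ofReal c * energy μ κ g := by
  have hbound (η : Ω) : Integrable (fun ξ ↦ c * (g ξ - g η) ^ 2) (κ η) :=
    ((hg2 η).sub (memLp_const _)).integrable_sq.const_mul c
  have hint (η : Ω) {i : ι} (hi : i ∈ s) :
      Integrable (fun ξ ↦ (ψ i (g ξ) - ψ i (g η)) ^ 2) (κ η) := by
    have hmeas : Measurable fun ξ ↦ (ψ i (g ξ) - ψ i (g η)) ^ 2 :=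
      (((hψ i).comp hg).sub_const _).pow_const 2
    refine (hbound η).mono' hmeas.aestronglyMeasurable (.of_forall fun ξ ↦ ?_)
    rw [norm_of_nonneg (sq_nonneg _)]
    exact (Finset.single_le_sum (f := fun i ↦ (ψ i (g ξ) - ψ i (g η)) ^ 2)
      (fun _ _ ↦ sq_nonneg _) hi).trans (hψc _ _)
  have hpt (η : Ω) :
      ∑ i ∈ s, meanSqIncrement κ (fun η ↦ ψ i (g η)) η ≤ c * meanSqIncrement κ g η := by
    simp only [meanSqIncrement]
    rw [← integral_finsetSum s fun i hi ↦ hint η hi, ← integral_const_mul]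
    exact integral_mono (integrable_finsetSum s fun i hi ↦ hint η hi) (hbound η)
      fun ξ ↦ hψc _ _
  simp only [energy]
  rw [← lintegral_finsetSum s fun i _ ↦
      (measurable_meanSqIncrement (by exact (hψ i).comp hg)).ennreal_ofReal,
    ← lintegral_const_mul' _ _ ENNReal.ofReal_ne_top]
  refine lintegral_mono fun η ↦ ?_
  rw [← ENNReal.ofReal_sum_of_nonneg fun _ _ ↦ meanSqIncrement_nonneg _ _ _,
    ← ENNReal.ofReal_mul' (meanSqIncrement_nonneg _ _ _)]
  exact ENNReal.ofReal_le_ofReal (hpt η)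

lemma sum_dirichletForm_comp_le {G : Type*} {κ : G → Kernel Ω Ω} [∀ x, IsFiniteKernel (κ x)]
    (hg : Measurable g) (hg2 : ∀ x η, MemLp g 2 (κ x η)) {ι : Type*} {s : Finset ι}
    {ψ : ι → ℝ → ℝ} (hψ : ∀ i, Measurable (ψ i)) {c : ℝ}
    (hψc : ∀ u v, ∑ i ∈ s, (ψ i u - ψ i v) ^ 2 ≤ c * (u - v) ^ 2) :
    ∑ i ∈ s, dirichletForm μ κ (fun η ↦ ψ i (g η)) ≤ ENNReal.ofReal c * dirichletForm μ κ g := by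
  simp only [dirichletForm]
  calc ∑ i ∈ s, 1 / 2 * ∑' x, energy μ (κ x) (fun η ↦ ψ i (g η))
      = 1 / 2 * ∑' x, ∑ i ∈ s, energy μ (κ x) (fun η ↦ ψ i (g η)) := by
        rw [← Finset.mul_sum, Summable.tsum_finsetSum fun _ _ ↦ ENNReal.summable]
    _ ≤ 1 / 2 * ∑' x, ENNReal.ofReal c * energy μ (κ x) g := by
        gcongr with x
        exact sum_energy_comp_le hg (hg2 x) hψ hψc
    _ = ENNReal.ofReal c * (1 / 2 * ∑' x, energy μ (κ x) g) := by
        rw [ENNReal.tsum_mul_left, mul_left_comm]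

lemma dirichletForm_abs_div_le {G : Type*} {κ : G → Kernel Ω Ω} [∀ x, IsFiniteKernel (κ x)]
    (hg : Measurable g) (hg2 : ∀ x η, MemLp g 2 (κ x η)) (r : ℝ) :
    dirichletForm μ κ (fun η ↦ |g η| / r) ≤ ENNReal.ofReal (r ^ 2)⁻¹ * dirichletForm μ κ g := by
  have hcontr (u v : ℝ) : (|u| / r - |v| / r) ^ 2 ≤ (r ^ 2)⁻¹ * (u - v) ^ 2 := by
    rw [← sub_div, div_pow, div_eq_inv_mul]
    gcongr ?_ * ?_
    exact sq_le_sq.2 (abs_abs_sub_abs_le_abs_sub u v)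
  simpa using sum_dirichletForm_comp_le (s := {()}) (ψ := fun _ u ↦ |u| / r) hg hg2
    (fun _ ↦ by fun_prop) (by simpa using hcontr)

end Energy

section SmallSupport

variable {Ω : Type*} [MeasurableSpace Ω] {μ : Measure Ω} {κ : Kernel Ω Ω}
  {g : Ω → ℝ} {A : Set Ω} {T : ℝ}

lemma Phi_kernelDiff_div_le [IsMarkovKernel κ] {η : Ω} (hg : MemLp g 2 (κ η)) (hA : MeasurableSet A)
    (hgA : ∀ ξ ∉ A, g ξ = 0) (hT : 1 < T) {r : ℝ}
    (h : T ≤ 4 * (kernelDiff κ g η / r) ^ 2 ∨ η ∉ A ∧ T * (κ η).real A ≤ 1) :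
    Phi (kernelDiff κ g η / r) ≤ 4 / (log T * r ^ 2) * meanSqIncrement κ g η := by
  have hlog : 0 < log T := log_pos hT
  have he := meanSqIncrement_nonneg κ g η
  rcases h with hbig | ⟨hηA, hκA⟩
  · calc Phi (kernelDiff κ g η / r) ≤ 4 / log T * (kernelDiff κ g η / r) ^ 2 :=
          Phi_le_four_div_log_mul_sq hT hbig
      _ ≤ 4 / log T * (meanSqIncrement κ g η / r ^ 2) := by
          rw [div_pow]
          gcongr
          exact sq_kernelDiff_le_meanSqIncrement hg
      _ = 4 / (log T * r ^ 2) * meanSqIncrement κ g η := by ring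
  · have hlogκ : (κ η).real A ≤ 4 / log T := by
      rw [le_div_iff₀ hlog]
      nlinarith [log_le_self (zero_le_one.trans hT.le),
        measureReal_nonneg (μ := κ η) (s := A)]
    have hgη (ξ : Ω) (hξ : ξ ∉ A) : g ξ = g η := (hgA ξ hξ).trans (hgA η hηA).symm
    calc Phi (kernelDiff κ g η / r) ≤ kernelDiff κ g η ^ 2 / r ^ 2 :=
          (Phi_le_sq _).trans_eq (div_pow _ _ _)
      _ ≤ 4 / log T * meanSqIncrement κ g η / r ^ 2 := by
          gcongr
          exact (sq_kernelDiff_le_measureReal_mul_meanSqIncrement hg hA hgη).trans (by gcongr)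
      _ = 4 / (log T * r ^ 2) * meanSqIncrement κ g η := by ring

-- The last term covers the points where neither alternative of `Phi_kernelDiff_div_le` holds: there
-- `Phi` is at most `T / 4`, and `η ∈ A` or `κ η A > T⁻¹`.
lemma ofReal_Phi_kernelDiff_div_le [IsMarkovKernel κ] {η : Ω} (hg : MemLp g 2 (κ η))
    (hA : MeasurableSet A) (hgA : ∀ ξ ∉ A, g ξ = 0) (hT : 1 < T) (r : ℝ) :
    ENNReal.ofReal (Phi (kernelDiff κ g η / r)) ≤
      ENNReal.ofReal (4 / (log T * r ^ 2)) * ENNReal.ofReal (meanSqIncrement κ g η) +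
        ENNReal.ofReal (T / 4) * (A.indicator 1 η + ENNReal.ofReal T * κ η A) := by
  have hlog : 0 < log T := log_pos hT
  by_cases h : T ≤ 4 * (kernelDiff κ g η / r) ^ 2 ∨ η ∉ A ∧ T * (κ η).real A ≤ 1
  · refine le_add_right ?_
    rw [← ENNReal.ofReal_mul (by positivity)]
    exact ENNReal.ofReal_le_ofReal (Phi_kernelDiff_div_le hg hA hgA hT h)
  · push Not at h
    obtain ⟨hsmall, hcharge⟩ := h
    have hone : 1 ≤ A.indicator 1 η + ENNReal.ofReal T * κ η A := by
      by_cases hηA : η ∈ A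
      · simp [Set.indicator_of_mem hηA]
      · refine le_add_left ?_
        rw [← ofReal_measureReal, ← ENNReal.ofReal_mul (by linarith), ENNReal.one_le_ofReal]
        exact (hcharge hηA).le
    refine le_add_left ?_
    calc ENNReal.ofReal (Phi (kernelDiff κ g η / r)) ≤ ENNReal.ofReal (T / 4) * 1 := by
          rw [mul_one]
          exact ENNReal.ofReal_le_ofReal (by linarith [Phi_le_sq (kernelDiff κ g η / r)])
      _ ≤ _ := by gcongr

lemma lintegral_indicator_add_mul_kernel_le [IsFiniteMeasure μ] (hκ : κ.Invariant μ)
    (hA : MeasurableSet A) (hT : 1 ≤ T) (hμA : T ^ 2 * μ.real A ≤ 1) :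
    ∫⁻ η, ENNReal.ofReal (T / 4) * (A.indicator 1 η + ENNReal.ofReal T * κ η A) ∂μ ≤
      ENNReal.ofReal (1 / 2) := by
  have hκA : ∫⁻ η, κ η A ∂μ = μ A := by
    conv_rhs => rw [← hκ.def, Measure.bind_apply hA κ.measurable.aemeasurable]
  have hT0 : 0 ≤ T := by linarith
  rw [lintegral_const_mul' _ _ ENNReal.ofReal_ne_top,
    lintegral_add_left (measurable_one.indicator hA), lintegral_indicator_one hA,
    lintegral_const_mul' _ _ ENNReal.ofReal_ne_top, hκA, ← ofReal_measureReal,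
    ← ENNReal.ofReal_mul hT0, ← ENNReal.ofReal_add (by positivity) (by positivity),
    ← ENNReal.ofReal_mul (by positivity)]
  refine ENNReal.ofReal_le_ofReal ?_
  nlinarith [mul_nonneg (mul_nonneg hT0 (sub_nonneg.2 hT)) (measureReal_nonneg (μ := μ) (s := A))]

lemma orliczNorm_kernelDiff_sq_le_of_support [IsFiniteMeasure μ] [IsMarkovKernel κ]
    (hκ : κ.Invariant μ) (hg : ∀ η, MemLp g 2 (κ η)) (hA : MeasurableSet A) (hgA : ∀ ξ ∉ A, g ξ = 0)
    (hT : 1 < T) (hμA : T ^ 2 * μ.real A ≤ 1) :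
    orliczNorm μ Phi (kernelDiff κ g) ^ 2 ≤ ENNReal.ofReal (8 / log T) * energy μ κ g := by
  have hlog : 0 < log T := log_pos hT
  refine orliczNorm_sq_le fun r hr hE ↦ ?_
  have henergy : ENNReal.ofReal (4 / (log T * r ^ 2)) * energy μ κ g ≤ ENNReal.ofReal (1 / 2) :=
    calc ENNReal.ofReal (4 / (log T * r ^ 2)) * energy μ κ g =
          ENNReal.ofReal (1 / (2 * r ^ 2)) * (ENNReal.ofReal (8 / log T) * energy μ κ g) := by
          rw [← mul_assoc, ← ENNReal.ofReal_mul (by positivity)]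
          congr 2
          field_simp
          norm_num
      _ ≤ ENNReal.ofReal (1 / (2 * r ^ 2)) * ENNReal.ofReal (r ^ 2) := by gcongr
      _ = ENNReal.ofReal (1 / 2) := by
          rw [← ENNReal.ofReal_mul (by positivity)]
          congr 1
          field_simp
  have hmeas : Measurable fun η ↦
      ENNReal.ofReal (T / 4) * (A.indicator 1 η + ENNReal.ofReal T * κ η A) :=
    ((measurable_one.indicator hA).add ((κ.measurable_coe hA).const_mul _)).const_mul _
  calc ∫⁻ η, ENNReal.ofReal (Phi (kernelDiff κ g η / r)) ∂μ
      ≤ _ := lintegral_mono fun η ↦ ofReal_Phi_kernelDiff_div_le (hg η) hA hgA hT r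
    _ = ENNReal.ofReal (4 / (log T * r ^ 2)) * energy μ κ g +
          ∫⁻ η, ENNReal.ofReal (T / 4) * (A.indicator 1 η + ENNReal.ofReal T * κ η A) ∂μ := by
        rw [lintegral_add_right _ hmeas, lintegral_const_mul' _ _ ENNReal.ofReal_ne_top, energy]
    _ ≤ ENNReal.ofReal (1 / 2) + ENNReal.ofReal (1 / 2) :=
        add_le_add henergy (lintegral_indicator_add_mul_kernel_le hκ hA hT.le hμA)
    _ = 1 := by rw [← ENNReal.ofReal_add] <;> norm_num

end SmallSupport

section Layers

/-- The layer of the real number `u` between the heights `a ≤ b`, that is, the length of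
`[a, b] ∩ (-∞, u]`. -/
def layer (a b u : ℝ) : ℝ := min u b - min u a

variable {a b u : ℝ}

lemma layer_of_le (hab : a ≤ b) (hu : u ≤ a) : layer a b u = 0 := by
  rw [layer, min_eq_left hu, min_eq_left (hu.trans hab), sub_self]

lemma layer_of_ge (hab : a ≤ b) (hu : b ≤ u) : layer a b u = b - a := by
  rw [layer, min_eq_right hu, min_eq_right (hab.trans hu)]

lemma measurable_layer (a b : ℝ) : Measurable (layer a b) := by
  unfold layer
  fun_prop

lemma monotone_layer (hab : a ≤ b) : Monotone (layer a b) := by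
  intro u v huv
  simp only [layer, min_def]
  split_ifs <;> linarith

lemma abs_layer_le (hab : a ≤ b) (u : ℝ) : |layer a b u| ≤ b - a := by
  rw [abs_le, layer, min_def, min_def]
  constructor <;> split_ifs <;> linarith

lemma sum_layer (t : ℕ → ℝ) (N : ℕ) (u : ℝ) :
    ∑ k ∈ Finset.range N, layer (t k) (t (k + 1)) u = layer (t 0) (t N) u :=
  Finset.sum_range_sub (fun k ↦ min u (t k)) N

lemma layer_sub_layer_le (a b : ℝ) {u v : ℝ} (hvu : v ≤ u) : layer a b u - layer a b v ≤ u - v := by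
  simp only [layer, min_def]
  split_ifs <;> linarith

lemma sum_sq_layer_sub_layer_le {t : ℕ → ℝ} (ht : Monotone t) (N : ℕ) (u v : ℝ) :
    ∑ k ∈ Finset.range N, (layer (t k) (t (k + 1)) u - layer (t k) (t (k + 1)) v) ^ 2 ≤
      (u - v) ^ 2 := by
  wlog hvu : v ≤ u generalizing u v
  · simpa only [sub_sq_comm] using this v u (le_of_not_ge hvu)
  have hnonneg (k : ℕ) : 0 ≤ layer (t k) (t (k + 1)) u - layer (t k) (t (k + 1)) v :=
    sub_nonneg.2 (monotone_layer (ht k.le_succ) hvu)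
  calc _ ≤ (∑ k ∈ Finset.range N, (layer (t k) (t (k + 1)) u - layer (t k) (t (k + 1)) v)) ^ 2 :=
        Finset.sum_sq_le_sq_sum_of_nonneg fun k _ ↦ hnonneg k
    _ ≤ (u - v) ^ 2 := by
        refine pow_le_pow_left₀ (Finset.sum_nonneg fun k _ ↦ hnonneg k) ?_ 2
        rw [Finset.sum_sub_distrib, sum_layer, sum_layer]
        exact layer_sub_layer_le _ _ hvu

end Layers

section Entropy

lemma sq_mul_log_sq_sub_sq_add_one_le {u : ℝ} (hu : 0 ≤ u) :
    u ^ 2 * log (u ^ 2) - u ^ 2 + 1 ≤ (2 * u + 1) * (u - 1) ^ 2 := by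
  obtain rfl | hpos := hu.eq_or_lt
  · norm_num
  calc u ^ 2 * log (u ^ 2) - u ^ 2 + 1 = 2 * u ^ 2 * log u - u ^ 2 + 1 := by
        rw [log_pow]; push_cast; ring
    _ ≤ 2 * u ^ 2 * (u - 1) - u ^ 2 + 1 := by
        gcongr
        exact log_le_sub_one_of_pos hpos
    _ = (2 * u + 1) * (u - 1) ^ 2 := by ring

lemma sq_mul_log_sq_le {T u : ℝ} (hT : 2 ≤ T) (hu : 0 < u) (huT : u ≤ 4 * T) :
    u ^ 2 * log (u ^ 2) ≤ 96 * (log T * T ^ 2) := by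
  have hlog : 0 ≤ log T := log_nonneg (by linarith)
  have hlogu : log (u ^ 2) ≤ 6 * log T :=
    calc log (u ^ 2) ≤ log (T ^ 6) := by
          refine log_le_log (by positivity) ?_
          calc u ^ 2 ≤ (4 * T) ^ 2 := by gcongr
            _ = 2 ^ 4 * T ^ 2 := by ring
            _ ≤ T ^ 4 * T ^ 2 := by gcongr
            _ = T ^ 6 := by ring
      _ = 6 * log T := by rw [log_pow]; norm_num
  calc u ^ 2 * log (u ^ 2) ≤ u ^ 2 * (6 * log T) := by gcongr
    _ ≤ (4 * T) ^ 2 * (6 * log T) := by gcongr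
    _ = 96 * (log T * T ^ 2) := by ring

/-- The `k`-th dyadic height `2 ^ (k + 1)`, starting at `2` so that all logarithms are positive. -/
def dyadicHeight (k : ℕ) : ℝ := 2 ^ (k + 1)

/-- The layer of `u` between the `k`-th dyadic height and its double. -/
def dyadicLayer (k : ℕ) : ℝ → ℝ := layer (dyadicHeight k) (dyadicHeight (k + 1))

lemma monotone_dyadicHeight : Monotone dyadicHeight :=
  fun _ _ h ↦ pow_le_pow_right₀ one_le_two (Nat.succ_le_succ h)

lemma dyadicHeight_succ (k : ℕ) : dyadicHeight (k + 1) = 2 * dyadicHeight k := pow_succ' _ _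

lemma two_le_dyadicHeight (k : ℕ) : 2 ≤ dyadicHeight k := by
  simpa [dyadicHeight] using monotone_dyadicHeight k.zero_le

lemma exists_dyadicHeight_near {u : ℝ} (hu : 4 ≤ u) :
    ∃ k, 2 * dyadicHeight k ≤ u ∧ u < 4 * dyadicHeight k := by
  obtain ⟨k, hku, huk⟩ := exists_nat_pow_near (show 1 ≤ u / 4 by linarith) one_lt_two
  refine ⟨k, ?_, ?_⟩ <;> rw [dyadicHeight] <;> rw [pow_succ] at * <;> linarith

lemma sq_mul_log_sq_sub_sq_add_one_le_sum_dyadicLayer {N : ℕ} {u : ℝ} (hu : 0 ≤ u)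
    (huN : u ≤ dyadicHeight N) :
    u ^ 2 * log (u ^ 2) - u ^ 2 + 1 ≤ 9 * (u - 1) ^ 2 +
      96 * ∑ k ∈ Finset.range N, log (dyadicHeight k) * dyadicLayer k u ^ 2 := by
  have hterm (k : ℕ) : 0 ≤ log (dyadicHeight k) * dyadicLayer k u ^ 2 :=
    mul_nonneg (log_nonneg (by linarith [two_le_dyadicHeight k])) (sq_nonneg _)
  have hsum := Finset.sum_nonneg fun k (_ : k ∈ Finset.range N) ↦ hterm k
  rcases le_total u 4 with hu4 | hu4
  · nlinarith [sq_mul_log_sq_sub_sq_add_one_le hu, sq_nonneg (u - 1)]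
  obtain ⟨k, hku, huk⟩ := exists_dyadicHeight_near hu4
  have hkN : k < N := by
    by_contra! hNk
    linarith [monotone_dyadicHeight hNk, two_le_dyadicHeight k]
  have hfull : dyadicLayer k u = dyadicHeight k := by
    rw [dyadicLayer, layer_of_ge (monotone_dyadicHeight k.le_succ) (by rwa [dyadicHeight_succ]),
      dyadicHeight_succ]
    ring
  have hk : log (dyadicHeight k) * dyadicHeight k ^ 2 ≤
      ∑ k ∈ Finset.range N, log (dyadicHeight k) * dyadicLayer k u ^ 2 :=
    calc log (dyadicHeight k) * dyadicHeight k ^ 2 =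
          log (dyadicHeight k) * dyadicLayer k u ^ 2 := by rw [hfull]
      _ ≤ _ := Finset.single_le_sum (fun k _ ↦ hterm k) (Finset.mem_range.2 hkN)
  nlinarith [sq_mul_log_sq_le (two_le_dyadicHeight k) (by linarith) huk.le, sq_nonneg (u - 1)]

end Entropy

section Talagrand

variable {Ω : Type*} [MeasurableSpace Ω] {G : Type*}

/-- The Talagrand-type inequality `Var_μ(g) ≤ C ∑ₓ ‖D_x g‖_Φ²` for all bounded measurable `g`. The
constant may be infinite. -/
def TalagrandInequality (μ : Measure Ω) (κ : G → Kernel Ω Ω) (C : ℝ≥0∞) : Prop :=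
  ∀ g : Ω → ℝ, Measurable g → (∃ M, ∀ η, |g η| ≤ M) →
    ENNReal.ofReal Var[g; μ] ≤ C * ∑' x, orliczNorm μ Phi (kernelDiff (κ x) g) ^ 2

namespace TalagrandInequality

variable {μ : Measure Ω} {κ : G → Kernel Ω Ω} [∀ x, IsMarkovKernel (κ x)] {C : ℝ≥0∞} {g F : Ω → ℝ}

lemma variance_le (hC : TalagrandInequality μ κ C) (hg : Measurable g)
    (hb : ∃ M, ∀ η, |g η| ≤ M) :
    ENNReal.ofReal Var[g; μ] ≤ 2 * C * dirichletForm μ κ g := by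
  rw [mul_comm 2 C, mul_assoc, two_mul_dirichletForm]
  refine (hC g hg hb).trans ?_
  gcongr with x
  exact orliczNorm_kernelDiff_sq_le_energy fun η ↦ memLp_of_abs_le hg hb 2

variable [IsProbabilityMeasure μ]

lemma log_mul_integral_sq_le (hC : TalagrandInequality μ κ C) (hκ : ∀ x, (κ x).Invariant μ)
    (hg : Measurable g) (hb : ∃ M, ∀ η, |g η| ≤ M) {A : Set Ω} (hA : MeasurableSet A)
    (hgA : ∀ η ∉ A, g η = 0) {T : ℝ} (hT : 2 ≤ T) (hμA : T ^ 2 * μ.real A ≤ 1) :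
    ENNReal.ofReal (log T * ∫ η, g η ^ 2 ∂μ) ≤ 32 * C * dirichletForm μ κ g := by
  have hlog : 0 < log T := log_pos (by linarith)
  have hμA' : μ.real A ≤ 1 / 2 := by nlinarith [measureReal_nonneg (μ := μ) (s := A)]
  have hvar := integral_sq_le_two_mul_variance (memLp_of_abs_le hg hb 2) hA hgA hμA'
  calc ENNReal.ofReal (log T * ∫ η, g η ^ 2 ∂μ)
      ≤ ENNReal.ofReal (2 * log T * Var[g; μ]) := ENNReal.ofReal_le_ofReal (by nlinarith)
    _ = ENNReal.ofReal (2 * log T) * ENNReal.ofReal Var[g; μ] :=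
        ENNReal.ofReal_mul (by positivity)
    _ ≤ ENNReal.ofReal (2 * log T) *
          (C * ∑' x, ENNReal.ofReal (8 / log T) * energy μ (κ x) g) := by
        gcongr
        refine (hC g hg hb).trans ?_
        gcongr with x
        exact orliczNorm_kernelDiff_sq_le_of_support (hκ x) (fun η ↦ memLp_of_abs_le hg hb 2) hA
          hgA (by linarith) hμA
    _ = ENNReal.ofReal (2 * log T * (8 / log T)) * (C * (2 * dirichletForm μ κ g)) := by
        rw [ENNReal.tsum_mul_left, ← two_mul_dirichletForm, ENNReal.ofReal_mul (p := 2 * log T)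
          (by positivity)]
        ring
    _ = 32 * C * dirichletForm μ κ g := by
        rw [show 2 * log T * (8 / log T) = 16 by field_simp; norm_num, ENNReal.ofReal_ofNat]
        ring

lemma integral_sub_one_sq_le (hC : TalagrandInequality μ κ C) (hF : Measurable F)
    (hb : ∃ M, ∀ η, |F η| ≤ M) (hF0 : ∀ η, 0 ≤ F η) (hF1 : ∫ η, F η ^ 2 ∂μ = 1) :
    ENNReal.ofReal (∫ η, (F η - 1) ^ 2 ∂μ) ≤ 4 * C * dirichletForm μ κ F :=
  calc ENNReal.ofReal (∫ η, (F η - 1) ^ 2 ∂μ) ≤ ENNReal.ofReal (2 * Var[F; μ]) :=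
        ENNReal.ofReal_le_ofReal <| integral_sub_one_sq_le_two_mul_variance
          (memLp_of_abs_le hF hb 2) (integral_nonneg hF0) hF1
    _ = 2 * ENNReal.ofReal Var[F; μ] := by
        rw [ENNReal.ofReal_mul zero_le_two, ENNReal.ofReal_ofNat]
    _ ≤ 2 * (2 * C * dirichletForm μ κ F) := by gcongr; exact hC.variance_le hF hb
    _ = 4 * C * dirichletForm μ κ F := by ring

lemma log_mul_integral_dyadicLayer_sq_le (hC : TalagrandInequality μ κ C)
    (hκ : ∀ x, (κ x).Invariant μ) (hF : Measurable F) (hF2 : MemLp F 2 μ)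
    (hF1 : ∫ η, F η ^ 2 ∂μ ≤ 1) (k : ℕ) :
    ENNReal.ofReal (log (dyadicHeight k) * ∫ η, dyadicLayer k (F η) ^ 2 ∂μ) ≤
      32 * C * dirichletForm μ κ (fun η ↦ dyadicLayer k (F η)) := by
  have hk : dyadicHeight k ≤ dyadicHeight (k + 1) := monotone_dyadicHeight k.le_succ
  have hT := two_le_dyadicHeight k
  exact hC.log_mul_integral_sq_le hκ ((measurable_layer _ _).comp hF)
    ⟨_, fun η ↦ abs_layer_le hk (F η)⟩ (measurableSet_le measurable_const hF)
    (fun η hη ↦ layer_of_le hk (not_le.1 hη).le) hT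
    ((sq_mul_measureReal_ge_le_integral_sq hF2 (by linarith)).trans hF1)

lemma sum_log_mul_integral_dyadicLayer_sq_le (hC : TalagrandInequality μ κ C)
    (hκ : ∀ x, (κ x).Invariant μ) (hF : Measurable F) (hb : ∃ M, ∀ η, |F η| ≤ M)
    (hF1 : ∫ η, F η ^ 2 ∂μ ≤ 1) (N : ℕ) :
    ENNReal.ofReal (∑ k ∈ Finset.range N,
        log (dyadicHeight k) * ∫ η, dyadicLayer k (F η) ^ 2 ∂μ) ≤
      32 * C * dirichletForm μ κ F := by
  have hlog (k : ℕ) : 0 ≤ log (dyadicHeight k) :=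
    log_nonneg (by linarith [two_le_dyadicHeight k])
  rw [ENNReal.ofReal_sum_of_nonneg fun k _ ↦
    mul_nonneg (hlog k) (integral_nonneg fun _ ↦ sq_nonneg _)]
  calc _ ≤ ∑ k ∈ Finset.range N, 32 * C * dirichletForm μ κ (fun η ↦ dyadicLayer k (F η)) :=
        Finset.sum_le_sum fun k _ ↦
          hC.log_mul_integral_dyadicLayer_sq_le hκ hF (memLp_of_abs_le hF hb 2) hF1 k
    _ ≤ 32 * C * (ENNReal.ofReal 1 * dirichletForm μ κ F) := by
        rw [← Finset.mul_sum]
        gcongr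
        refine sum_dirichletForm_comp_le hF (fun x η ↦ memLp_of_abs_le hF hb 2)
          (fun k ↦ measurable_layer _ _) fun u v ↦ ?_
        simpa only [one_mul] using sum_sq_layer_sub_layer_le monotone_dyadicHeight N u v
    _ = 32 * C * dirichletForm μ κ F := by rw [ENNReal.ofReal_one, one_mul]

end TalagrandInequality

variable {μ : Measure Ω} [IsProbabilityMeasure μ] {F : Ω → ℝ}

lemma integral_sq_mul_log_sq_le_sum_dyadicLayer (hF : Measurable F)
    (hF0 : ∀ η, 0 ≤ F η) (hF1 : ∫ η, F η ^ 2 ∂μ = 1) {N : ℕ} (hN : ∀ η, F η ≤ dyadicHeight N) :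
    ∫ η, F η ^ 2 * log (F η ^ 2) ∂μ ≤ 9 * ∫ η, (F η - 1) ^ 2 ∂μ +
      96 * ∑ k ∈ Finset.range N,
        log (dyadicHeight k) * ∫ η, dyadicLayer k (F η) ^ 2 ∂μ := by
  have hb : ∃ M, ∀ η, |F η| ≤ M := ⟨_, fun η ↦ (abs_of_nonneg (hF0 η)).trans_le (hN η)⟩
  have hF2 : MemLp F 2 μ := memLp_of_abs_le hF hb 2
  have hent := integrable_sq_mul_log_sq (ν := μ) hF hb
  have hentsub : Integrable (fun η ↦ F η ^ 2 * log (F η ^ 2) - F η ^ 2) μ :=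
    hent.sub hF2.integrable_sq
  have hquad : Integrable (fun η ↦ 9 * (F η - 1) ^ 2) μ :=
    (hF2.sub (memLp_const 1)).integrable_sq.const_mul 9
  have hlayer (k : ℕ) :
      Integrable (fun η ↦ log (dyadicHeight k) * dyadicLayer k (F η) ^ 2) μ :=
    (memLp_of_abs_le ((measurable_layer _ _).comp hF)
      ⟨_, fun η ↦ abs_layer_le (monotone_dyadicHeight k.le_succ) (F η)⟩ 2).integrable_sq.const_mul _
  have hlayers : Integrable (fun η ↦ 96 * ∑ k ∈ Finset.range N,
      log (dyadicHeight k) * dyadicLayer k (F η) ^ 2) μ :=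
    (integrable_finsetSum _ fun k _ ↦ hlayer k).const_mul 96
  calc ∫ η, F η ^ 2 * log (F η ^ 2) ∂μ
      = ∫ η, (F η ^ 2 * log (F η ^ 2) - F η ^ 2 + 1) ∂μ := by
        rw [integral_add hentsub (integrable_const 1), integral_sub hent hF2.integrable_sq, hF1]
        simp
    _ ≤ ∫ η, (9 * (F η - 1) ^ 2 + 96 * ∑ k ∈ Finset.range N,
          log (dyadicHeight k) * dyadicLayer k (F η) ^ 2) ∂μ :=
        integral_mono (hentsub.add (integrable_const 1)) (hquad.add hlayers) fun η ↦
          sq_mul_log_sq_sub_sq_add_one_le_sum_dyadicLayer (hF0 η) (hN η)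
    _ = _ := by
        rw [integral_add hquad hlayers, integral_const_mul, integral_const_mul,
          integral_finsetSum _ fun k _ ↦ hlayer k]
        simp_rw [integral_const_mul]

lemma TalagrandInequality.integral_sq_mul_log_sq_le {κ : G → Kernel Ω Ω}
    [∀ x, IsMarkovKernel (κ x)] {C : ℝ≥0∞} (hC : TalagrandInequality μ κ C)
    (hκ : ∀ x, (κ x).Invariant μ) (hF : Measurable F) (hb : ∃ M, ∀ η, |F η| ≤ M)
    (hF0 : ∀ η, 0 ≤ F η) (hF1 : ∫ η, F η ^ 2 ∂μ = 1) :
    ENNReal.ofReal (∫ η, F η ^ 2 * log (F η ^ 2) ∂μ) ≤ 3108 * C * dirichletForm μ κ F := by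
  obtain ⟨N, hN⟩ : ∃ N, ∀ η, F η ≤ dyadicHeight N := by
    obtain ⟨M, hM⟩ := hb
    obtain ⟨n, hn⟩ := pow_unbounded_of_one_lt M one_lt_two
    exact ⟨n, fun η ↦ ((le_abs_self _).trans (hM η)).trans
      (hn.le.trans (pow_le_pow_right₀ one_le_two n.le_succ))⟩
  calc ENNReal.ofReal (∫ η, F η ^ 2 * log (F η ^ 2) ∂μ)
      ≤ ENNReal.ofReal (9 * ∫ η, (F η - 1) ^ 2 ∂μ) + ENNReal.ofReal (96 *
          ∑ k ∈ Finset.range N, log (dyadicHeight k) * ∫ η, dyadicLayer k (F η) ^ 2 ∂μ) :=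
        (ENNReal.ofReal_le_ofReal
          (integral_sq_mul_log_sq_le_sum_dyadicLayer hF hF0 hF1 hN)).trans ENNReal.ofReal_add_le
    _ ≤ 9 * (4 * C * dirichletForm μ κ F) + 96 * (32 * C * dirichletForm μ κ F) := by
        rw [ENNReal.ofReal_mul (by norm_num), ENNReal.ofReal_mul (by norm_num),
          ENNReal.ofReal_ofNat, ENNReal.ofReal_ofNat]
        gcongr
        · exact hC.integral_sub_one_sq_le hF hb hF0 hF1
        · exact hC.sum_log_mul_integral_dyadicLayer_sq_le hκ hF hb hF1.le N
    _ = 3108 * C * dirichletForm μ κ F := by ring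

end Talagrand

lemma integral_sq_mul_log_sq_div {Ω : Type*} [MeasurableSpace Ω] (μ : Measure Ω) (f : Ω → ℝ)
    {s : ℝ} (hs : 0 < s) :
    ∫ η, f η ^ 2 * log (f η ^ 2 / s) ∂μ =
      s * ∫ η, (|f η| / √s) ^ 2 * log ((|f η| / √s) ^ 2) ∂μ := by
  rw [← integral_const_mul]
  congr with η
  rw [div_pow, sq_abs, sq_sqrt hs.le]
  field_simp

theorem stmt7_general {Ω : Type*} [MeasurableSpace Ω] {μ : Measure Ω} [IsProbabilityMeasure μ]
    {G : Type*} {κ : G → Kernel Ω Ω} [∀ x, IsMarkovKernel (κ x)] (hκ : ∀ x, (κ x).Invariant μ)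
    {C : ℝ≥0∞} (hC : TalagrandInequality μ κ C)
    {f : Ω → ℝ} (hf : Measurable f) (hb : ∃ M, ∀ η, |f η| ≤ M) :
    ENNReal.ofReal (∫ η, f η ^ 2 * log (f η ^ 2 / ∫ ζ, f ζ ^ 2 ∂μ) ∂μ) ≤
      3108 * C * dirichletForm μ κ f := by
  set s := ∫ ζ, f ζ ^ 2 ∂μ with hs
  obtain h0 | hpos : 0 = s ∨ 0 < s := (integral_nonneg fun _ ↦ sq_nonneg _).eq_or_lt
  · simp [← h0]
  have hF_bdd : ∃ M, ∀ η, |(|f η| / √s)| ≤ M :=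
    let ⟨M, hM⟩ := hb
    ⟨M / √s, fun η ↦ by rw [abs_of_nonneg (by positivity)]; gcongr; exact hM η⟩
  have hF_sq : ∫ η, (|f η| / √s) ^ 2 ∂μ = 1 := by
    simp_rw [div_pow, sq_abs, sq_sqrt hpos.le]
    rw [integral_div, ← hs, div_self hpos.ne']
  have henergy := sq_sqrt hpos.le ▸
    dirichletForm_abs_div_le (μ := μ) hf (fun x η ↦ memLp_of_abs_le (ν := κ x η) hf hb 2) √s
  have hnormalized := hC.integral_sq_mul_log_sq_le hκ (hf.abs.div_const √s) hF_bdd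
    (fun η ↦ by positivity) hF_sq
  rw [integral_sq_mul_log_sq_div μ f hpos, ENNReal.ofReal_mul hpos.le]
  calc _ ≤ ENNReal.ofReal s * (3108 * C * (ENNReal.ofReal s⁻¹ * dirichletForm μ κ f)) := by
        gcongr
        exact hnormalized.trans (by gcongr)
    _ = ENNReal.ofReal (s * s⁻¹) * (3108 * C * dirichletForm μ κ f) := by
        rw [ENNReal.ofReal_mul hpos.le]
        ring
    _ = 3108 * C * dirichletForm μ κ f := by
        rw [mul_inv_cancel₀ hpos.ne', ENNReal.ofReal_one, one_mul]

/-- If the Talagrand-type inequality `Var_μ(g) ≤ C ∑_x ‖D_x g‖_Φ²` holds for all bounded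
measurable `g` (with `C ≥ 1`), then the log-Sobolev-type inequality
`Ent_μ(f²) ≤ (13/4)·700⁴ · C · ℰ(f,f)` holds for all bounded measurable `f`, where
`D_x g(η) = ∫ g dκ_x(η) − g(η)` and
`ℰ(f,f) = (1/2) ∑_x ∫ (∫ (f(ξ)−f(η))² dκ_x(η)(ξ)) dμ(η)`. -/
theorem stmt7 {Ω : Type*} [MeasurableSpace Ω] (μ : Measure Ω) [IsProbabilityMeasure μ]
    {G : Type*} [Countable G]
    (κ : G → Kernel Ω Ω) [∀ x, IsMarkovKernel (κ x)]
    (hinv : ∀ x : G, μ.bind (fun η => κ x η) = μ)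
    (C : ℝ) (hC : 1 ≤ C)
    (htal : ∀ g : Ω → ℝ, Measurable g → (∃ M : ℝ, ∀ η, |g η| ≤ M) →
      ENNReal.ofReal (∫ η, (g η - ∫ ζ, g ζ ∂μ) ^ 2 ∂μ) ≤
        ENNReal.ofReal C *
          ∑' x : G, (orliczNorm μ Phi (fun η => (∫ ξ, g ξ ∂(κ x η)) - g η)) ^ 2)
    (f : Ω → ℝ) (hf : Measurable f) (hfb : ∃ M : ℝ, ∀ η, |f η| ≤ M) :
    ENNReal.ofReal (∫ η, (f η) ^ 2 * Real.log ((f η) ^ 2 / ∫ ζ, (f ζ) ^ 2 ∂μ) ∂μ) ≤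
      ENNReal.ofReal ((13 / 4) * 700 ^ 4 * C) *
        ((1 / 2 : ℝ≥0∞) *
          ∑' x : G, ∫⁻ η, ENNReal.ofReal (∫ ξ, (f ξ - f η) ^ 2 ∂(κ x η)) ∂μ) := by
  refine (stmt7_general hinv (C := ENNReal.ofReal C) (fun g hg hb ↦ ?_) hf hfb).trans ?_
  · rw [variance_eq_integral hg.aemeasurable]
    exact htal g hg hb
  · rw [← ENNReal.ofReal_ofNat 3108, ← ENNReal.ofReal_mul (by norm_num)]
    exact mul_le_mul_left (ENNReal.ofReal_le_ofReal (by linarith)) _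
end

section
/- Let n_L, n_R ≥ 1 be natural numbers and t ≥ 0 a real number. Then (2(n_L+n_R)−3)!! · t · ∫_{0}^{t} s^{2n_L−2} (t−s)^{2n_R−2} ds ≤ (2n_L−3)!! · (2n_R−3)!! · t^{2(n_L+n_R)−2}, where k!! denotes the double factorial (with the convention (−1)!! = 1, i.e. natural-number truncated subtraction in the arguments). -/
open MeasureTheory Real Nat

/-!
The integral is a rescaled Beta integral:
`∫₀ᵗ s^p (t - s)^q ds = p! q! / (p + q + 1)! · t^(p + q + 1)`.
For even exponents `p = 2a`, `q = 2b`, splitting each factorial into its two double factorials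
cancels everything except `a! b! / (a + b)!`, so the two sides of the inequality differ exactly by
the factor `(a + b).choose b ≥ 1`.
-/

lemma factorial_mul_integral_pow_mul_one_sub_pow (p q : ℕ) :
    ((p + q + 1)! : ℝ) * ∫ x in (0:ℝ)..1, x ^ p * (1 - x) ^ q = (p ! : ℝ) * (q ! : ℝ) := by
  have beta_eq : Complex.betaIntegral (p + 1) (q + 1) =
      ((∫ x in (0:ℝ)..1, x ^ p * (1 - x) ^ q : ℝ) : ℂ) := by
    simp [Complex.betaIntegral, ← intervalIntegral.integral_ofReal]
  have gamma_eq := Complex.Gamma_mul_Gamma_eq_betaIntegral (s := p + 1) (t := q + 1)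
    (by norm_cast; positivity) (by norm_cast; positivity)
  have add_eq : (p + 1 + (q + 1) : ℂ) = (p + q + 1 : ℕ) + 1 := by push_cast; ring
  rw [add_eq, beta_eq] at gamma_eq
  simp only [Complex.Gamma_nat_eq_factorial] at gamma_eq
  exact_mod_cast gamma_eq.symm

lemma integral_pow_mul_sub_pow (t : ℝ) (p q : ℕ) :
    ∫ s in (0:ℝ)..t, s ^ p * (t - s) ^ q =
      t ^ (p + q + 1) * ∫ x in (0:ℝ)..1, x ^ p * (1 - x) ^ q := by
  calc ∫ s in (0:ℝ)..t, s ^ p * (t - s) ^ q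
      = t * ∫ x in (0:ℝ)..1, (t * x) ^ p * (t - t * x) ^ q := by
        rw [intervalIntegral.mul_integral_comp_mul_left (f := fun s ↦ s ^ p * (t - s) ^ q),
          mul_zero, mul_one]
    _ = t * ∫ x in (0:ℝ)..1, t ^ (p + q) * (x ^ p * (1 - x) ^ q) := by
        congr! 3 with x
        rw [← mul_one_sub, mul_pow, mul_pow]
        ring
    _ = t ^ (p + q + 1) * ∫ x in (0:ℝ)..1, x ^ p * (1 - x) ^ q := by
        rw [intervalIntegral.integral_const_mul]
        ring

-- For `n = 0` the truncated `2 * 0 - 1 = 0` still gives the conventional `(-1)‼ = 1`.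
lemma factorial_two_mul_eq (n : ℕ) : (2 * n)! = 2 ^ n * n ! * (2 * n - 1)‼ := by
  rw [← doubleFactorial_two_mul]
  cases n with
  | zero => rfl
  | succ n => exact factorial_eq_mul_doubleFactorial (2 * n + 1)

lemma factorial_two_mul_add_one_eq (n : ℕ) : (2 * n + 1)! = (2 * n + 1)‼ * (2 ^ n * n !) := by
  rw [factorial_eq_mul_doubleFactorial, doubleFactorial_two_mul]

lemma choose_mul_doubleFactorial_mul_integral (t : ℝ) (a b : ℕ) :
    ((a + b).choose b : ℝ) *
        (((2 * (a + b) + 1)‼ : ℝ) * ∫ s in (0:ℝ)..t, s ^ (2 * a) * (t - s) ^ (2 * b)) =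
      ((2 * a - 1)‼ : ℝ) * ((2 * b - 1)‼ : ℝ) * t ^ (2 * (a + b) + 1) := by
  have beta := factorial_mul_integral_pow_mul_one_sub_pow (2 * a) (2 * b)
  rw [← mul_add, factorial_two_mul_add_one_eq, factorial_two_mul_eq a, factorial_two_mul_eq b,
    ← add_choose_mul_factorial_mul_factorial] at beta
  push_cast at beta
  rw [integral_pow_mul_sub_pow, ← mul_add]
  have factor_ne_zero : (2 ^ (a + b) * a ! * b ! : ℝ) ≠ 0 := by positivity
  apply mul_left_cancel₀ factor_ne_zero
  linear_combination t ^ (2 * (a + b) + 1) * beta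

lemma doubleFactorial_mul_integral_le (t : ℝ) (a b : ℕ) :
    ((2 * (a + b) + 1)‼ : ℝ) * t * ∫ s in (0:ℝ)..t, s ^ (2 * a) * (t - s) ^ (2 * b) ≤
      ((2 * a - 1)‼ : ℝ) * ((2 * b - 1)‼ : ℝ) * t ^ (2 * (a + b + 1)) := by
  set lhs := ((2 * (a + b) + 1)‼ : ℝ) * t * ∫ s in (0:ℝ)..t, s ^ (2 * a) * (t - s) ^ (2 * b)
  have choose_mul_lhs : ((a + b).choose b : ℝ) * lhs =
      ((2 * a - 1)‼ : ℝ) * ((2 * b - 1)‼ : ℝ) * t ^ (2 * (a + b + 1)) := by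
    linear_combination t * choose_mul_doubleFactorial_mul_integral t a b
  have choose_pos : 0 < (a + b).choose b := Nat.choose_pos (Nat.le_add_left b a)
  have lhs_nonneg : 0 ≤ lhs := by
    refine nonneg_of_mul_nonneg_right ?_ (Nat.cast_pos.mpr choose_pos : (0:ℝ) < _)
    rw [choose_mul_lhs, pow_mul]
    positivity
  rw [← choose_mul_lhs]
  exact le_mul_of_one_le_left lhs_nonneg (Nat.one_le_cast.mpr choose_pos)

theorem stmt10_general (nL nR : ℕ) (hL : 1 ≤ nL) (hR : 1 ≤ nR) (t : ℝ) :
    ((2 * (nL + nR) - 3)‼ : ℝ) * t *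
        ∫ s in (0:ℝ)..t, s ^ (2 * (nL : ℝ) - 2) * (t - s) ^ (2 * (nR : ℝ) - 2) ≤
      ((2 * nL - 3)‼ : ℝ) * ((2 * nR - 3)‼ : ℝ) * t ^ (2 * ((nL : ℝ) + nR) - 2) := by
  obtain ⟨a, rfl⟩ := Nat.exists_eq_add_of_le' hL
  obtain ⟨b, rfl⟩ := Nat.exists_eq_add_of_le' hR
  have exponent_left : 2 * ((a + 1 : ℕ) : ℝ) - 2 = (2 * a : ℕ) := by push_cast; ring
  have exponent_right : 2 * ((b + 1 : ℕ) : ℝ) - 2 = (2 * b : ℕ) := by push_cast; ring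
  have exponent_total : 2 * (((a + 1 : ℕ) : ℝ) + (b + 1 : ℕ)) - 2 = (2 * (a + b + 1) : ℕ) := by
    push_cast; ring
  have index_total : 2 * (a + 1 + (b + 1)) - 3 = 2 * (a + b) + 1 := by lia
  simp only [exponent_left, exponent_right, exponent_total, index_total, Real.rpow_natCast]
  exact doubleFactorial_mul_integral_le t a b

/-- For `n_L, n_R ≥ 1` and `t ≥ 0`:
`(2(n_L+n_R)−3)‼ · t · ∫₀ᵗ s^(2n_L−2) (t−s)^(2n_R−2) ds
  ≤ (2n_L−3)‼ · (2n_R−3)‼ · t^(2(n_L+n_R)−2)`. -/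
theorem stmt10 (nL nR : ℕ) (hL : 1 ≤ nL) (hR : 1 ≤ nR) (t : ℝ) (ht : 0 ≤ t) :
    ((2 * (nL + nR) - 3)‼ : ℝ) * t *
        ∫ s in (0:ℝ)..t, s ^ (2 * (nL : ℝ) - 2) * (t - s) ^ (2 * (nR : ℝ) - 2) ≤
      ((2 * nL - 3)‼ : ℝ) * ((2 * nR - 3)‼ : ℝ) * t ^ (2 * ((nL : ℝ) + nR) - 2) :=
  stmt10_general nL nR hL hR t
end
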